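/- Let T be a tree on n ≥ 2 vertices. Then the spectrum of the eccentricity matrix 𝓔(T) is symmetric about the origin (for every eigenvalue λ with multiplicity k, −λ is also an eigenvalue with multiplicity k) if and only if the diameter of T is odd. -/

import Mathlib

open SimpleGraph Finset Matrix Polynomial

/-- The eccentricity of a vertex: the greatest distance from `u` to any vertex. -/
noncomputable def ecc {V : Type*} [Fintype V] (G : SimpleGraph V) (u : V) : ℕ :=
  Finset.univ.sup fun v => G.dist u v

/-- The diameter of a graph: the greatest distance between any pair of vertices. -/
noncomputable def gdiam {V : Type*} [Fintype V] (G : SimpleGraph V) : ℕ :=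
  Finset.univ.sup fun p : V × V => G.dist p.1 p.2

/-- The eccentricity matrix: `(u,v)` entry is `d(u,v)` if `d(u,v) = min (e u) (e v)`,
and `0` otherwise. -/
noncomputable def eccMatrix {V : Type*} [Fintype V] (G : SimpleGraph V) : Matrix V V ℝ :=
  Matrix.of fun u v =>
    if G.dist u v = min (ecc G u) (ecc G v) then (G.dist u v : ℝ) else 0

lemma dist_split_of_mem {V : Type*} {G : SimpleGraph V} (hG : G.Connected) {u w c : V}
    (p : G.Walk u w) (hp : p.length = G.dist u w) (hc : c ∈ p.support) :
    G.dist u w = G.dist u c + G.dist c w := by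
  classical
  have h1 := SimpleGraph.dist_le (p.takeUntil c hc)
  have h2 := SimpleGraph.dist_le (p.dropUntil c hc)
  have h3 := congrArg Walk.length (p.take_spec hc)
  rw [Walk.length_append] at h3
  have h4 := hG.dist_triangle (u := u) (v := c) (w := w)
  omega

lemma mem_of_dist_split {V : Type*} {T : SimpleGraph V} (hT : T.IsTree) {u v c : V}
    (h : T.dist u v = T.dist u c + T.dist c v) (p : T.Walk u v) : c ∈ p.support := by
  classical
  obtain ⟨q1, h1⟩ := hT.connected.exists_walk_length_eq_dist u c
  obtain ⟨q2, h2⟩ := hT.connected.exists_walk_length_eq_dist c v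
  have hq : (q1.append q2).IsPath := by
    apply Walk.isPath_of_length_eq_dist
    rw [Walk.length_append]; omega
  have := (hT.isAcyclic.subsingleton_path u v).elim ⟨_, hq⟩ ⟨_, p.bypass_isPath⟩
  have h3 : q1.append q2 = p.bypass := congrArg Subtype.val this
  apply p.support_bypass_subset_support
  rw [← h3, Walk.mem_support_append_iff]
  left; simp

lemma tree_split {V : Type*} {T : SimpleGraph V} (hT : T.IsTree) {u v c : V}
    (h : T.dist u v = T.dist u c + T.dist c v) (w : V) :
    T.dist u w = T.dist u c + T.dist c w ∨ T.dist w v = T.dist w c + T.dist c v := by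
  obtain ⟨q1, h1⟩ := hT.connected.exists_walk_length_eq_dist u w
  obtain ⟨q2, h2⟩ := hT.connected.exists_walk_length_eq_dist w v
  have := mem_of_dist_split hT h (q1.append q2)
  rw [Walk.mem_support_append_iff] at this
  rcases this with h | h
  · exact Or.inl (dist_split_of_mem hT.connected q1 h1 h)
  · exact Or.inr (dist_split_of_mem hT.connected q2 h2 h)

lemma exists_mid {V : Type*} {G : SimpleGraph V} (hG : G.Connected) (u v : V) (k : ℕ)
    (hk : k ≤ G.dist u v) : ∃ c, G.dist u c = k ∧ G.dist u v = G.dist u c + G.dist c v := by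
  obtain ⟨q, h⟩ := hG.exists_walk_length_eq_dist u v
  refine ⟨q.getVert k, ?_⟩
  have h0 := dist_split_of_mem hG q h (q.getVert_mem_support k)
  have h1 := SimpleGraph.dist_le (q.take k)
  have h2 := SimpleGraph.dist_le (q.drop k)
  have h3 : (q.take k).length = min k q.length := by simp
  have h4 : (q.drop k).length = q.length - k := by simp
  refine ⟨?_, h0⟩
  omega

lemma dist_le_ecc {V : Type*} [Fintype V] (G : SimpleGraph V) (u v : V) :
    G.dist u v ≤ ecc G u :=
  Finset.le_sup (f := fun v => G.dist u v) (Finset.mem_univ v)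

lemma dist_le_gdiam {V : Type*} [Fintype V] (G : SimpleGraph V) (u v : V) :
    G.dist u v ≤ gdiam G :=
  Finset.le_sup (f := fun p : V × V => G.dist p.1 p.2) (Finset.mem_univ (u, v))

lemma ecc_le_gdiam {V : Type*} [Fintype V] (G : SimpleGraph V) (u : V) :
    ecc G u ≤ gdiam G :=
  Finset.sup_le fun v _ => dist_le_gdiam G u v

lemma exists_gdiam {V : Type*} [Fintype V] [Nonempty V] (G : SimpleGraph V) :
    ∃ u v, G.dist u v = gdiam G := by
  obtain ⟨p, _, hp⟩ := Finset.exists_mem_eq_sup (Finset.univ : Finset (V × V))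
    Finset.univ_nonempty (fun p : V × V => G.dist p.1 p.2)
  exact ⟨p.1, p.2, hp.symm⟩

lemma charpoly_neg_rootMultiplicity {V : Type*} [Fintype V] [DecidableEq V]
    (M : Matrix V V ℝ) (x : ℝ) :
    (-M).charpoly.rootMultiplicity x = M.charpoly.rootMultiplicity (-x) := by
  have h1 : M.charpoly.comp (-X) = (-1) ^ Fintype.card V * (-M).charpoly := by
    unfold Matrix.charpoly
    rw [← Matrix.det_neg]
    change (Polynomial.compRingHom (-X)) (det _) = _
    rw [RingHom.map_det]
    congr 1
    ext1 i j
    by_cases hij : i = j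
    · subst hij; simp [charmatrix_apply_eq]; ring
    · simp [charmatrix_apply_ne _ _ _ hij]
  have h2 := rootMultiplicity_comp_C_mul_X_add_C M.charpoly (-1) 0 x (by simp)
  have h3 : (C (-1) * X + C 0 : ℝ[X]) = -X := by simp
  rw [h3, h1] at h2
  simp only [neg_mul, one_mul, add_zero] at h2
  rw [← h2]
  rcases neg_one_pow_eq_or ℝ[X] (Fintype.card V) with h | h <;> rw [h]
  · simp
  · have : (-1 : ℝ[X]) * (-M).charpoly = C (-1) * (-M).charpoly := by simp
    rw [this, ← Polynomial.count_roots, ← Polynomial.count_roots, roots_C_mul _ (by norm_num)]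

lemma symm_of_sign {V : Type*} [Fintype V] [DecidableEq V] (M : Matrix V V ℝ) (s : V → Bool)
    (h : ∀ u v, s u = s v → M u v = 0) (x : ℝ) :
    M.charpoly.rootMultiplicity x = M.charpoly.rootMultiplicity (-x) := by
  rw [← charpoly_neg_rootMultiplicity]
  let D : Matrix V V ℝ := Matrix.diagonal fun u => if s u then 1 else -1
  have hD : D * D = 1 := by
    rw [Matrix.diagonal_mul_diagonal, ← Matrix.diagonal_one]
    congr 1; ext u; split_ifs <;> simp
  have h1 : -M = D * (M * D) := by
    ext u v
    simp only [D, Matrix.diagonal_mul, Matrix.mul_diagonal, Matrix.neg_apply]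
    have := h u v
    cases hu : s u <;> cases hv : s v <;> simp_all
  rw [h1, Matrix.charpoly_mul_comm, Matrix.mul_assoc, hD, Matrix.mul_one]

lemma trace_cube_zero {V : Type*} [Fintype V] [DecidableEq V] (M : Matrix V V ℝ)
    (hM : M.IsHermitian)
    (h : ∀ x, M.charpoly.rootMultiplicity x = M.charpoly.rootMultiplicity (-x)) :
    (M * M * M).trace = 0 := by
  have h1 : (M * M * M).trace = ∑ i, hM.eigenvalues i ^ 3 := by
    have h2 : M ^ 3 = Unitary.conjStarAlgAut ℝ _ hM.eigenvectorUnitary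
        (diagonal (RCLike.ofReal ∘ hM.eigenvalues) ^ 3) := by
      rw [map_pow, ← hM.spectral_theorem]
    have h3 : M * M * M = M ^ 3 := by rw [pow_succ, pow_two]
    rw [h3, h2, Unitary.conjStarAlgAut_apply, Matrix.trace_mul_comm, ← Matrix.mul_assoc]
    simp [Matrix.diagonal_pow, Matrix.trace_diagonal]
  have h4 : M.charpoly.roots = M.charpoly.roots.map (fun x => -x) := by
    ext x
    have h5 : Multiset.count x (M.charpoly.roots.map (fun x => -x))
        = Multiset.count (-x) M.charpoly.roots := by
      have := Multiset.count_map_eq_count' (fun x : ℝ => -x) M.charpoly.roots neg_injective (-x)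
      simpa using this
    rw [h5, count_roots, count_roots, h]
  have h6 : (M.charpoly.roots.map (fun x => x ^ 3)).sum = ∑ i, hM.eigenvalues i ^ 3 := by
    rw [hM.roots_charpoly_eq_eigenvalues]
    rw [Multiset.map_map]
    rfl
  have h7 : (M.charpoly.roots.map (fun x => x ^ 3)).sum
      = -(M.charpoly.roots.map (fun x => x ^ 3)).sum := by
    conv_lhs => rw [h4]
    rw [Multiset.map_map, ← Multiset.sum_map_neg', Multiset.map_map]
    refine congrArg Multiset.sum (Multiset.map_congr rfl fun x _ => ?_)
    simp only [Function.comp]; ring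
  rw [h1, ← h6]; linarith

lemma eccMatrix_nonneg {V : Type*} [Fintype V] (G : SimpleGraph V) (u v : V) :
    0 ≤ eccMatrix G u v := by
  simp only [eccMatrix, Matrix.of_apply]; split_ifs <;> simp

lemma eccMatrix_herm {V : Type*} [Fintype V] (G : SimpleGraph V) :
    (eccMatrix G).IsHermitian := by
  ext u v
  simp [eccMatrix, SimpleGraph.dist_comm, min_comm]

lemma eccMatrix_pos {V : Type*} [Fintype V] (G : SimpleGraph V) (u v : V)
    (h : G.dist u v = min (ecc G u) (ecc G v)) (h0 : 0 < G.dist u v) :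
    0 < eccMatrix G u v := by
  simp only [eccMatrix, Matrix.of_apply]; rw [if_pos h]; exact_mod_cast h0

/-- The spectrum of the eccentricity matrix of a tree on `n ≥ 2` vertices is symmetric about
the origin if and only if the diameter of the tree is odd. -/
theorem stmt12 {V : Type*} [Fintype V] [DecidableEq V] (T : SimpleGraph V)
    (hT : T.IsTree) (hn : 2 ≤ Fintype.card V) :
    (∀ x : ℝ, (eccMatrix T).charpoly.rootMultiplicity x
        = (eccMatrix T).charpoly.rootMultiplicity (-x)) ↔ Odd (gdiam T) := by
  have hc := hT.connected
  have hne : Nonempty V := hc.nonempty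
  obtain ⟨u, v, huv⟩ := exists_gdiam T
  constructor
  · intro h
    by_contra hodd
    rw [Nat.not_odd_iff_even] at hodd
    obtain ⟨r, hr⟩ := hodd
    have hr0 : 0 < r := by
      have : Nontrivial V := Fintype.one_lt_card_iff_nontrivial.mp hn
      obtain ⟨a, b, hab⟩ := exists_pair_ne V
      have h1 := hc.pos_dist_of_ne hab
      have h2 := dist_le_gdiam T a b
      omega
    obtain ⟨c, hc1, hc2⟩ := exists_mid hc u v r (by omega)
    have hcv : T.dist c v = r := by omega
    have hcu : T.dist c u = r := by rw [SimpleGraph.dist_comm]; exact hc1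
    have hec : ecc T c = r := by
      apply le_antisymm
      · refine Finset.sup_le fun w _ => ?_
        have h1 := dist_le_gdiam T u w
        have h2 := dist_le_gdiam T w v
        have h3 : T.dist w c = T.dist c w := SimpleGraph.dist_comm
        change T.dist c w ≤ r
        rcases tree_split hT hc2 w with h4 | h4 <;> omega
      · rw [← hcv]; exact dist_le_ecc T c v
    have hvu : T.dist v u = T.dist u v := SimpleGraph.dist_comm
    have e1 := dist_le_ecc T u v
    have e2 := dist_le_ecc T v u
    have e3 := ecc_le_gdiam T u
    have e4 := ecc_le_gdiam T v
    have p1 := eccMatrix_pos T c u (by omega) (by omega)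
    have p2 := eccMatrix_pos T u v (by omega) (by omega)
    have hvc : T.dist v c = r := by rw [SimpleGraph.dist_comm]; exact hcv
    have p3 := eccMatrix_pos T v c (by omega) (by omega)
    have ht := trace_cube_zero _ (eccMatrix_herm T) h
    have hn := eccMatrix_nonneg T
    have hpos : 0 < (eccMatrix T * eccMatrix T * eccMatrix T).trace := by
      have nn2 : ∀ i j, 0 ≤ (eccMatrix T * eccMatrix T) i j := fun i j => by
        rw [Matrix.mul_apply]
        exact Finset.sum_nonneg fun k _ => mul_nonneg (hn _ _) (hn _ _)
      have nn3 : ∀ i j, 0 ≤ (eccMatrix T * eccMatrix T * eccMatrix T) i j := fun i j => by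
        rw [Matrix.mul_apply]
        exact Finset.sum_nonneg fun k _ => mul_nonneg (nn2 _ _) (hn _ _)
      have q2 : 0 < (eccMatrix T * eccMatrix T) c v := by
        rw [Matrix.mul_apply]
        exact Finset.sum_pos' (fun k _ => mul_nonneg (hn _ _) (hn _ _))
          ⟨u, Finset.mem_univ _, mul_pos p1 p2⟩
      have q3 : 0 < (eccMatrix T * eccMatrix T * eccMatrix T) c c := by
        rw [Matrix.mul_apply]
        exact Finset.sum_pos' (fun k _ => mul_nonneg (nn2 _ _) (hn _ _))
          ⟨v, Finset.mem_univ _, mul_pos q2 p3⟩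
      exact Finset.sum_pos' (fun k _ => nn3 k k) ⟨c, Finset.mem_univ _, q3⟩
    linarith
  · rintro ⟨r, hr⟩
    obtain ⟨a, ha1, ha2⟩ := exists_mid hc u v r (by omega)
    obtain ⟨b, hb1, hb2⟩ := exists_mid hc a v 1 (by omega)
    have hab : T.Adj a b := SimpleGraph.dist_eq_one_iff_adj.mp hb1
    have hub : T.dist u b = r + 1 := by
      have h1 := hc.dist_triangle (u := u) (v := b) (w := v)
      have h2 := hc.dist_triangle (u := u) (v := a) (w := b)
      omega
    have hba : T.dist b a = 1 := by rw [SimpleGraph.dist_comm]; exact hb1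
    have hbu : T.dist b u = r + 1 := by rw [SimpleGraph.dist_comm]; exact hub
    have hau : T.dist a u = r := by rw [SimpleGraph.dist_comm]; exact ha1
    -- a general one-sided claim
    have key : ∀ a b v : V, T.dist a b = 1 → T.dist b v = r → T.dist a v = r + 1 →
        ∀ w w', T.dist w b = T.dist w a + 1 → T.dist w' b = T.dist w' a + 1 →
        T.dist w w' < ecc T w := by
      intro a b v hab hbv hav w w' hw hw'
      have far : ∀ w, T.dist w b = T.dist w a + 1 → T.dist w v = T.dist w a + (r + 1) := by
        intro w hw
        have hvb : T.dist v b = r := by rw [SimpleGraph.dist_comm]; exact hbv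
        have hva : T.dist v a = r + 1 := by rw [SimpleGraph.dist_comm]; exact hav
        rcases tree_split hT (u := w) (v := b) (c := a) (by omega) v with h | h <;> omega
      have h1 := far w hw
      have h2 := far w' hw'
      have h3 := dist_le_gdiam T w' v
      have h4 := dist_le_ecc T w v
      have h5 := hc.dist_triangle (u := w) (v := a) (w := w')
      have h6 : T.dist a w' = T.dist w' a := SimpleGraph.dist_comm
      omega
    apply symm_of_sign _ (fun w => decide (T.dist w b = T.dist w a + 1))
    intro w w' hs
    have hlt : ∀ w w', (decide (T.dist w b = T.dist w a + 1)
        = decide (T.dist w' b = T.dist w' a + 1)) → T.dist w w' < ecc T w := by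
      intro w w' hs
      rw [decide_eq_decide] at hs
      have hw := hT.dist_eq_dist_add_one_of_adj w hab
      have hw' := hT.dist_eq_dist_add_one_of_adj w' hab
      by_cases h : T.dist w b = T.dist w a + 1
      · exact key a b v hb1 (by omega) (by omega) w w' h (hs.mp h)
      · have h' := fun hh => h (hs.mpr hh)
        exact key b a u hba hau hbu w w' (hw.resolve_right h) (hw'.resolve_right h')
    have l1 := hlt w w' hs
    have l2 := hlt w' w hs.symm
    rw [SimpleGraph.dist_comm] at l2
    simp only [eccMatrix, Matrix.of_apply]
    rw [if_neg]
    omega
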